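/- Let g be a Lie algebra over a field K of characteristic 0 with Lie bracket μ ∈ C^2(g), and let D := [μ, −] be the induced differential D : C^a(g) → C^{a+1}(g). Then D is an odd derivation of the Nijenhuis bracket: for all A ∈ C^a(g) and B ∈ C^b(g), D[A,B] = [D A, B] + (−1)^{a−1} [A, D B]. -/

import Mathlib

/-!
Nijenhuis bracket on alternating multilinear cochains `C^n(V)` of an `R`-module `V`.

We encode an `n`-ary map `(Fin n → V) → V` as a map `(ℕ → V) → V` (depending only on the
first `n` coordinates) via `ext`, so that the insertion product and the Nijenhuis bracket,
whose output arities involve `ℕ`-subtraction, can be stated uniformly.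
-/

/-- Extend an `n`-ary map on `V` to a map on sequences, reading the first `n` coordinates. -/
def ext {V : Type*} {n : ℕ} (f : (Fin n → V) → V) : (ℕ → V) → V :=
  fun x => f fun i => x i

/-- The insertion product `A∘B` of an `a`-ary map `f` and a `b`-ary map `g`
(encoded as maps on sequences):
`(A∘B)(x_1,…,x_{a+b−1}) = Σ_σ sgn(σ) A(B(x_{σ(1)},…,x_{σ(b)}), x_{σ(b+1)},…,x_{σ(a+b−1)})`,
the sum running over all permutations `σ` of `{1,…,a+b−1}` increasing on the first `b` and
on the last `a-1` positions; it is `0` when `a = 0`. -/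
noncomputable def ins {V : Type*} [AddCommGroup V] (a b : ℕ) (f g : (ℕ → V) → V) :
    (ℕ → V) → V := fun x =>
  if hA : a = 0 then 0
  else
    ∑ σ ∈ Finset.univ.filter (fun σ : Equiv.Perm (Fin (a + b - 1)) =>
        (∀ i j : Fin (a + b - 1), i < j → (j : ℕ) < b → σ i < σ j) ∧
        (∀ i j : Fin (a + b - 1), i < j → b ≤ (i : ℕ) → σ i < σ j)),
      (Equiv.Perm.sign σ : ℤ) •
        f (fun i : ℕ =>
          if i = 0 then
            g (fun k : ℕ =>
              if hk : k < b then x ((σ ⟨k, by omega⟩ : Fin (a + b - 1)) : ℕ) else 0)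
          else if hi : b + i - 1 < a + b - 1 then
            x ((σ ⟨b + i - 1, hi⟩ : Fin (a + b - 1)) : ℕ)
          else 0)

/-- The Nijenhuis bracket `[A,B] := A∘B − (−1)^{(a−1)(b−1)} B∘A`. -/
noncomputable def nij {V : Type*} [AddCommGroup V] (a b : ℕ) (f g : (ℕ → V) → V) :
    (ℕ → V) → V := fun x =>
  ins a b f g x - (Int.negOnePow (((a : ℤ) - 1) * ((b : ℤ) - 1)) : ℤ) • ins b a g f x

/-!
Let `ι_x` denote contraction with a first argument `x`. Sorting the shuffles in `f ∘ g` by the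
position of the first argument gives the Leibniz rule `ι_x (f ∘ g) = f ∘ ι_x g ± ι_x f ∘ g`. The
associator `(f ∘ g) ∘ h - f ∘ (g ∘ h)` therefore also satisfies a Leibniz rule in its three entries.
A cochain is determined by its contractions and its value on no arguments, so an induction shows
that the associator is graded symmetric in `g` and `h`: the insertion product is graded right
pre-Lie. Hence its graded commutator, the Nijenhuis bracket, satisfies the graded Jacobi identity,
and that `[μ, -]` is an odd derivation is the case of this identity where `μ` has arity two.
-/

/-- Alternating cochains on `V` with values in `V`, of all arities at once: an `n`-ary cochain is
recorded by its values on lists of length `n`, so that arities never have to be compared. -/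
def AltCochain (V : Type*) [AddCommGroup V] : AddSubgroup (List V → V) where
  carrier := {f |
    (∀ l₁ x y l₂, f (l₁ ++ (x + y) :: l₂) = f (l₁ ++ x :: l₂) + f (l₁ ++ y :: l₂)) ∧
    ∀ l₁ x l₂, f (l₁ ++ x :: x :: l₂) = 0}
  add_mem' {f g} hf hg :=
    ⟨fun l₁ x y l₂ => by simp only [Pi.add_apply, hf.1, hg.1]; abel,
      fun l₁ x l₂ => by simp only [Pi.add_apply, hf.2, hg.2, add_zero]⟩
  zero_mem' := ⟨fun _ _ _ _ => (add_zero 0).symm, fun _ _ _ => rfl⟩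
  neg_mem' {f} hf :=
    ⟨fun l₁ x y l₂ => by simp only [Pi.neg_apply, hf.1]; abel,
      fun l₁ x l₂ => by simp only [Pi.neg_apply, hf.2, neg_zero]⟩

namespace AltCochain

variable {V : Type*} [AddCommGroup V]

/-- The contraction `ι_x f = f(x, ⋯)`. -/
def contraction : V →+ AltCochain V →+ AltCochain V :=
  AddMonoidHom.mk'
    (fun x => AddMonoidHom.mk'
      (fun f => ⟨fun l => f.1 (x :: l),
        fun l₁ => f.2.1 (x :: l₁), fun l₁ => f.2.2 (x :: l₁)⟩)
      fun _ _ => rfl)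
    fun x y => AddMonoidHom.ext fun f => Subtype.ext <| funext fun l => f.2.1 [] x y l

@[simp]
theorem contraction_coe (x : V) (f : AltCochain V) (l : List V) :
    (contraction x f).1 l = f.1 (x :: l) := rfl

theorem coe_zero_cons (f : AltCochain V) (l : List V) : f.1 (0 :: l) = 0 := by
  rw [← contraction_coe, map_zero]
  rfl

theorem contraction_self (x : V) (f : AltCochain V) : contraction x (contraction x f) = 0 :=
  Subtype.ext <| funext <| f.2.2 [] x

theorem contraction_comm (x y : V) (f : AltCochain V) :
    contraction x (contraction y f) = -contraction y (contraction x f) := by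
  have h := contraction_self (x + y) f
  simp only [map_add, AddMonoidHom.add_apply, contraction_self, zero_add, add_zero] at h
  exact eq_neg_of_add_eq_zero_right h

theorem coe_cons_cons_comm (x y : V) (f : AltCochain V) (l : List V) :
    f.1 (x :: y :: l) = -f.1 (y :: x :: l) :=
  congrArg (fun k : AltCochain V => k.1 l) (contraction_comm y x f)

/-- The grading involution `f ↦ (-1)ⁿ f` on cochains of arity `n`. -/
def parity : AltCochain V →+ AltCochain V :=
  AddMonoidHom.mk'
    (fun f => ⟨fun l => (-1 : ℤ) ^ l.length • f.1 l,
      fun l₁ x y l₂ => by simp [f.2.1], fun l₁ x l₂ => by simp [f.2.2]⟩)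
    fun _ _ => Subtype.ext <| funext fun _ => smul_add _ _ _

theorem parity_coe (f : AltCochain V) (l : List V) :
    (parity f).1 l = (-1 : ℤ) ^ l.length • f.1 l := rfl

theorem contraction_parity (x : V) (f : AltCochain V) :
    contraction x (parity f) = -parity (contraction x f) := by
  ext l
  simp [parity_coe, pow_succ]

theorem parity_parity (f : AltCochain V) : parity (parity f) = f := by
  ext l
  simp [parity_coe, smul_smul, ← mul_pow]

/-- The value of the insertion product `f ∘ g` on a list: by the Leibniz rule
`ι_x (f ∘ g) = f ∘ ι_x g - ι_x f ∘ parity g`, it can be computed one argument at a time. -/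
def insertAt : List V → AltCochain V →+ AltCochain V →+ V
  | [] => AddMonoidHom.mk'
      (fun f => AddMonoidHom.mk' (fun g => f.1 [g.1 []]) fun g h => f.2.1 [] (g.1 []) (h.1 []) [])
      fun _ _ => rfl
  | x :: l =>
      (insertAt l).compl₂ (contraction x) - ((insertAt l).comp (contraction x)).compl₂ parity

theorem insertAt_nil (f g : AltCochain V) : insertAt [] f g = f.1 [g.1 []] := rfl

theorem insertAt_cons (x : V) (l : List V) (f g : AltCochain V) :
    insertAt (x :: l) f g =
      insertAt l f (contraction x g) - insertAt l (contraction x f) (parity g) := rfl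

theorem insertAt_append_add (l₁ l₂ : List V) (x y : V) (f g : AltCochain V) :
    insertAt (l₁ ++ (x + y) :: l₂) f g =
      insertAt (l₁ ++ x :: l₂) f g + insertAt (l₁ ++ y :: l₂) f g := by
  induction l₁ generalizing f g with
  | nil =>
    simp only [List.nil_append, insertAt_cons, map_add, AddMonoidHom.add_apply]
    abel
  | cons z l₁ ih =>
    simp only [List.cons_append, insertAt_cons, ih]
    abel

theorem insertAt_append_self (l₁ l₂ : List V) (x : V) (f g : AltCochain V) :
    insertAt (l₁ ++ x :: x :: l₂) f g = 0 := by
  induction l₁ generalizing f g with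
  | nil => simp [insertAt_cons, contraction_self, contraction_parity]
  | cons z l₁ ih => simp only [List.cons_append, insertAt_cons, ih, sub_zero]

/-- The insertion product `f ∘ g`. -/
def insertion : AltCochain V →+ AltCochain V →+ AltCochain V :=
  AddMonoidHom.mk'
    (fun f => AddMonoidHom.mk'
      (fun g => ⟨fun l => insertAt l f g,
        fun l₁ x y l₂ => insertAt_append_add l₁ l₂ x y f g,
        fun l₁ x l₂ => insertAt_append_self l₁ l₂ x f g⟩)
      fun _ _ => Subtype.ext <| funext fun l => map_add (insertAt l f) _ _)
    fun _ _ => AddMonoidHom.ext fun g => Subtype.ext <| funext fun l =>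
      DFunLike.congr_fun (map_add (insertAt l) _ _) g

theorem insertion_coe (f g : AltCochain V) (l : List V) :
    (insertion f g).1 l = insertAt l f g := rfl

theorem contraction_insertion (x : V) (f g : AltCochain V) :
    contraction x (insertion f g) =
      insertion f (contraction x g) - insertion (contraction x f) (parity g) := rfl

theorem parity_insertion (f g : AltCochain V) :
    parity (insertion f g) = -insertion (parity f) (parity g) := by
  ext l
  induction l generalizing f g with
  | nil => simp [parity_coe, insertion_coe, insertAt_nil]
  | cons x l ih =>
    have h : contraction x (parity (insertion f g)) =
        -parity (insertion f (contraction x g)) +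
          parity (insertion (contraction x f) (parity g)) := by
      rw [contraction_parity, contraction_insertion, map_sub]
      abel
    have h' : contraction x (-insertion (parity f) (parity g)) =
        insertion (parity f) (parity (contraction x g)) -
          insertion (parity (contraction x f)) g := by
      simp only [map_neg, contraction_insertion, contraction_parity, parity_parity,
        AddMonoidHom.neg_apply]
      abel
    rw [← contraction_coe, h, ← contraction_coe, h']
    simp [ih, parity_parity, sub_eq_add_neg]

/-- The failure of associativity of the insertion product. -/
def associator (f g h : AltCochain V) : AltCochain V :=
  insertion (insertion f g) h - insertion f (insertion g h)

theorem contraction_associator (x : V) (f g h : AltCochain V) :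
    contraction x (associator f g h) =
      associator f g (contraction x h) - associator f (contraction x g) (parity h) +
        associator (contraction x f) (parity g) (parity h) := by
  simp only [associator, contraction_insertion, parity_insertion, map_sub, map_neg,
    AddMonoidHom.sub_apply]
  abel

theorem associator_coe_nil (f g h : AltCochain V) :
    (associator f g h).1 [] = -f.1 [h.1 [], g.1 []] := by
  simp [associator, insertion_coe, insertAt_nil, insertAt_cons, parity_coe]

/-- `f` is concentrated in arity `n`. -/
def HasDegree (n : ℤ) (f : AltCochain V) : Prop :=
  ∀ l : List V, (l.length : ℤ) ≠ n → f.1 l = 0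

namespace HasDegree

variable {m n : ℤ} {f g h : AltCochain V}

theorem contraction (hf : HasDegree n f) (x : V) : HasDegree (n - 1) (contraction x f) :=
  fun l hl => hf (x :: l) (by grind)

theorem parity_eq (hf : HasDegree n f) : parity f = (n.negOnePow : ℤ) • f := by
  ext l
  by_cases hl : (l.length : ℤ) = n
  · simp [parity_coe, ← hl, Int.coe_negOnePow_natCast]
  · simp [parity_coe, hf l hl]

theorem add (hf : HasDegree n f) (hg : HasDegree n g) : HasDegree n (f + g) :=
  fun l hl => by simp [hf l hl, hg l hl]

theorem sub (hf : HasDegree n f) (hg : HasDegree n g) : HasDegree n (f - g) :=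
  fun l hl => by simp [hf l hl, hg l hl]

theorem zsmul (hf : HasDegree n f) (c : ℤ) : HasDegree n (c • f) :=
  fun l hl => by simp [hf l hl]

theorem eq_zero_of_ne (hf : HasDegree m f) (hf' : HasDegree n f) (h : m ≠ n) : f = 0 := by
  ext l
  by_cases hl : (l.length : ℤ) = m
  · exact hf' l (hl.trans_ne h)
  · exact hf l hl

theorem eq_zero_of_neg (hf : HasDegree n f) (hn : n < 0) : f = 0 := by
  ext l
  exact hf l (by omega)

theorem toNat (hf : HasDegree n f) : HasDegree n.toNat f := by
  by_cases hn : n < 0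
  · rw [hf.eq_zero_of_neg hn]
    exact fun _ _ => rfl
  · rwa [Int.toNat_of_nonneg (not_lt.1 hn)]

theorem insertAt_eq_zero (hf : HasDegree m f) (hg : HasDegree n g)
    (l : List V) (hl : (l.length : ℤ) ≠ m + n - 1) : insertAt l f g = 0 := by
  induction l generalizing m n f g with
  | nil =>
    by_cases hm : m = 1
    · have hg₀ : g.1 [] = 0 := hg [] (by grind)
      rw [insertAt_nil, hg₀, coe_zero_cons]
    · exact hf _ (by grind)
  | cons x l ih =>
    simp only [List.length_cons, Nat.cast_add, Nat.cast_one] at hl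
    rw [insertAt_cons, hg.parity_eq, map_zsmul, ih hf (hg.contraction x) (by omega),
      ih (hf.contraction x) hg (by omega), smul_zero, sub_zero]

theorem insertion (hf : HasDegree m f) (hg : HasDegree n g) :
    HasDegree (m + n - 1) (insertion f g) :=
  hf.insertAt_eq_zero hg

theorem insertAt_eq_zero_of_nonpos (hf : HasDegree n f) (hn : n ≤ 0) (g : AltCochain V)
    (l : List V) : insertAt l f g = 0 := by
  induction l generalizing n f g with
  | nil => exact hf _ (by grind)
  | cons x l ih =>
    rw [insertAt_cons, ih hf hn, ih (hf.contraction x) (by omega), sub_zero]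

end HasDegree

variable {a b c : ℤ} {f g h : AltCochain V}

theorem contraction_associator_of_hasDegree (hg : HasDegree b g) (hh : HasDegree c h) (x : V)
    (f : AltCochain V) :
    contraction x (associator f g h) =
      associator f g (contraction x h) - (c.negOnePow : ℤ) • associator f (contraction x g) h +
        (b.negOnePow * c.negOnePow : ℤ) • associator (contraction x f) g h := by
  rw [contraction_associator, hg.parity_eq, hh.parity_eq]
  simp only [associator, map_zsmul, AddMonoidHom.smul_apply]
  module

theorem associator_coe_nil_symm (hg : HasDegree b g) (hh : HasDegree c h) (f : AltCochain V) :
    (associator f g h).1 [] =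
      (((b - 1) * (c - 1)).negOnePow : ℤ) • (associator f h g).1 [] := by
  rw [associator_coe_nil, associator_coe_nil, coe_cons_cons_comm]
  by_cases hg₀ : g.1 [] = 0
  · simp [hg₀, coe_zero_cons]
  by_cases hh₀ : h.1 [] = 0
  · rw [hh₀, ← contraction_coe, coe_zero_cons, neg_zero, neg_zero, smul_zero]
  obtain rfl : 0 = b := by_contra fun hb => hg₀ (hg [] hb)
  obtain rfl : 0 = c := by_contra fun hc => hh₀ (hh [] hc)
  simp

theorem associator_symm (hg : HasDegree b g) (hh : HasDegree c h) (f : AltCochain V) :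
    associator f g h = (((b - 1) * (c - 1)).negOnePow : ℤ) • associator f h g := by
  ext l
  change (associator f g h).1 l = (((b - 1) * (c - 1)).negOnePow : ℤ) • (associator f h g).1 l
  induction l generalizing b c f g h with
  | nil => exact associator_coe_nil_symm hg hh f
  | cons x l ih =>
    set s : ℤ := (((b - 1) * (c - 1)).negOnePow : ℤ) with hs
    have hgh : (((b - 1) * (c - 1 - 1)).negOnePow : ℤ) = -(s * b.negOnePow) := by
      rw [mul_sub_one, Int.negOnePow_sub, Int.negOnePow_sub b]
      simp [hs]
    have hhg : (((b - 1 - 1) * (c - 1)).negOnePow : ℤ) = -(s * c.negOnePow) := by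
      rw [sub_one_mul, Int.negOnePow_sub, Int.negOnePow_sub c]
      simp [hs]
    have hc : (c.negOnePow * c.negOnePow : ℤ) = 1 := by
      rw [← Units.val_mul, Int.units_mul_self, Units.val_one]
    rw [← contraction_coe, ← contraction_coe,
      contraction_associator_of_hasDegree hg hh, contraction_associator_of_hasDegree hh hg]
    simp only [AddSubgroup.coe_add, AddSubgroup.coe_sub, Pi.add_apply, Pi.sub_apply,
      AddSubgroup.coe_zsmul, Pi.smul_apply, ih hg (hh.contraction x) f,
      ih (hg.contraction x) hh f, ih hg hh (contraction x f), hgh, hhg]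
    linear_combination (norm := module) hc • (s • (associator f h (contraction x g)).1 l)

/-- The Nijenhuis bracket of cochains of arities `a` and `b`. -/
def bracket (a b : ℤ) (f g : AltCochain V) : AltCochain V :=
  insertion f g - (((a - 1) * (b - 1)).negOnePow : ℤ) • insertion g f

theorem HasDegree.bracket (hf : HasDegree a f) (hg : HasDegree b g) :
    HasDegree (a + b - 1) (bracket a b f g) :=
  (hf.insertion hg).sub (add_comm b a ▸ (hg.insertion hf).zsmul _)

theorem bracket_congr {a' b' : ℤ} (hf : HasDegree a f) (hf' : HasDegree a' f)
    (hg : HasDegree b g) (hg' : HasDegree b' g) : bracket a b f g = bracket a' b' f g := by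
  by_cases ha : a = a'
  · by_cases hb : b = b'
    · rw [ha, hb]
    · simp [bracket, hg.eq_zero_of_ne hg' hb]
  · simp [bracket, hf.eq_zero_of_ne hf' ha]

theorem bracket_bracket (hf : HasDegree a f) (hg : HasDegree b g) (hh : HasDegree c h) :
    bracket a (b + c - 1) f (bracket b c g h) =
      bracket (a + b - 1) c (bracket a b f g) h +
        (((a - 1) * (b - 1)).negOnePow : ℤ) • bracket b (a + c - 1) g (bracket a c f h) := by
  have hf_gh : (((a - 1) * (b + c - 1 - 1)).negOnePow : ℤ) =
      ((a - 1) * (b - 1)).negOnePow * ((a - 1) * (c - 1)).negOnePow := by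
    rw [← Units.val_mul, ← Int.negOnePow_add]
    ring_nf
  have hfg_h : (((a + b - 1 - 1) * (c - 1)).negOnePow : ℤ) =
      ((a - 1) * (c - 1)).negOnePow * ((b - 1) * (c - 1)).negOnePow := by
    rw [← Units.val_mul, ← Int.negOnePow_add]
    ring_nf
  have hg_fh : (((b - 1) * (a + c - 1 - 1)).negOnePow : ℤ) =
      ((a - 1) * (b - 1)).negOnePow * ((b - 1) * (c - 1)).negOnePow := by
    rw [← Units.val_mul, ← Int.negOnePow_add]
    ring_nf
  have hsq : (((a - 1) * (b - 1)).negOnePow * ((a - 1) * (b - 1)).negOnePow : ℤ) = 1 := by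
    rw [← Units.val_mul, Int.units_mul_self, Units.val_one]
  have hfgh := associator_symm hg hh f
  have hgfh := associator_symm hf hh g
  have hhfg := associator_symm hf hg h
  simp only [bracket, associator, hf_gh, hfg_h, hg_fh, map_sub, map_zsmul, AddMonoidHom.sub_apply,
    AddMonoidHom.smul_apply] at hfgh hgfh hhfg ⊢
  generalize (((a - 1) * (b - 1)).negOnePow : ℤ) = α at *
  generalize (((a - 1) * (c - 1)).negOnePow : ℤ) = β at *
  generalize (((b - 1) * (c - 1)).negOnePow : ℤ) = γ at *
  linear_combination (norm := module) α • hgfh - hfgh - (β * γ) • hhfg +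
    hsq • (γ • insertion (insertion f h) g - (β * γ) • insertion (insertion h f) g)

end AltCochain

/-- A permutation of `Fin n` is a `(b, n - b)`-shuffle if it is increasing on the first `b`
positions and on the remaining ones. -/
def IsShuffle {n : ℕ} (b : ℕ) (σ : Equiv.Perm (Fin n)) : Prop :=
  (∀ i j : Fin n, i < j → (j : ℕ) < b → σ i < σ j) ∧
  ∀ i j : Fin n, i < j → b ≤ (i : ℕ) → σ i < σ j

/-- The permutation of `Fin (n + 1)` whose one-line notation is that of `τ`, with all values raised
by one and `0` inserted at position `p`. -/
def insertZero {n : ℕ} (p : Fin (n + 1)) (τ : Equiv.Perm (Fin n)) : Equiv.Perm (Fin (n + 1)) :=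
  Equiv.Perm.decomposeFin.symm (0, τ) * p.cycleRange

instance {n b : ℕ} (σ : Equiv.Perm (Fin n)) : Decidable (IsShuffle b σ) :=
  inferInstanceAs (Decidable (_ ∧ _))

section Shuffle

open Equiv.Perm

variable {n : ℕ}

theorem insertZero_self (p : Fin (n + 1)) (τ : Equiv.Perm (Fin n)) : insertZero p τ p = 0 := by
  simp [insertZero]

theorem insertZero_succAbove (p : Fin (n + 1)) (τ : Equiv.Perm (Fin n)) (i : Fin n) :
    insertZero p τ (p.succAbove i) = (τ i).succ := by
  simp [insertZero]

theorem sign_insertZero (p : Fin (n + 1)) (τ : Equiv.Perm (Fin n)) :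
    (sign (insertZero p τ) : ℤ) = (-1) ^ (p : ℕ) * sign τ := by
  simp [insertZero, mul_comm]

theorem insertZero_bijective :
    Function.Bijective fun q : Fin (n + 1) × Equiv.Perm (Fin n) => insertZero q.1 q.2 := by
  rw [Fintype.bijective_iff_injective_and_card]
  refine ⟨?_, by simp [Fintype.card_perm, Nat.factorial_succ]⟩
  rintro ⟨p, τ⟩ ⟨p', τ'⟩ (h : insertZero p τ = insertZero p' τ')
  obtain rfl : p = p' := (insertZero p τ).injective <| by
    rw [insertZero_self, h, insertZero_self]
  rw [insertZero, insertZero, mul_left_inj] at h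
  simpa using h

theorem cons_comp_insertZero {α : Type*} (x : α) (y : Fin n → α) (p : Fin (n + 1))
    (τ : Equiv.Perm (Fin n)) :
    (Fin.cons x y : Fin (n + 1) → α) ∘ insertZero p τ = p.insertNth x (y ∘ τ) := by
  refine Fin.eq_insertNth_iff.2 ⟨?_, ?_⟩
  · simp [insertZero_self]
  · ext i
    simp [Fin.removeNth, insertZero_succAbove]

theorem val_succAbove (p : Fin (n + 1)) (i : Fin n) :
    (p.succAbove i : ℕ) = if (i : ℕ) < p then (i : ℕ) else i + 1 := by
  simp only [Fin.succAbove, Fin.lt_def, Fin.val_castSucc]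
  split <;> simp

theorem isShuffle_insertZero {b : ℕ} {p : Fin (n + 1)} {τ : Equiv.Perm (Fin n)} :
    IsShuffle b (insertZero p τ) ↔
      ((p : ℕ) = 0 ∧ 0 < b ∧ IsShuffle (b - 1) τ) ∨ ((p : ℕ) = b ∧ IsShuffle b τ) := by
  simp only [IsShuffle, Fin.forall_iff_succAbove p, insertZero_self, insertZero_succAbove,
    Fin.succ_lt_succ_iff, Fin.succAbove_lt_succAbove_iff, lt_irrefl, Fin.not_lt_zero, Fin.succ_pos,
    false_imp_iff, implies_true, true_and, and_true]
  simp only [Fin.lt_def, val_succAbove]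
  constructor
  · rintro ⟨h₁, h₂⟩
    have hp : (p : ℕ) = 0 ∨ (p : ℕ) = b := by
      by_contra! ⟨hp₀, hpb⟩
      rcases hpb.lt_or_gt with hlt | hgt
      · exact (h₁ ⟨0, by omega⟩).1 (by grind) hlt
      · exact (h₂ ⟨b, by omega⟩).1 (by grind) (by grind)
    rcases hp with hp | hp <;> grind
  · grind

theorem ofFn_insertNth {α : Type*} (p : Fin (n + 1)) (x : α) (y : Fin n → α) :
    List.ofFn (p.insertNth x y : Fin (n + 1) → α) =
      (List.ofFn y).take p ++ x :: (List.ofFn y).drop p := by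
  apply List.ext_getElem
  · grind [List.length_ofFn]
  · intro i hi _
    simp only [List.getElem_ofFn]
    rcases Fin.eq_self_or_eq_succAbove p ⟨i, by simpa using hi⟩ with h | ⟨j, h⟩
    · rw [h, Fin.insertNth_apply_same]
      grind
    · rw [h, Fin.insertNth_apply_succAbove]
      have hi_eq : i = p.succAbove j := congrArg Fin.val h
      rw [val_succAbove] at hi_eq
      grind

theorem sum_isShuffle_succ {M : Type*} [AddCommMonoid M] (b : ℕ)
    (F : Equiv.Perm (Fin (n + 1)) → M) :
    ∑ σ with IsShuffle b σ, F σ =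
      (if 0 < b then ∑ τ with IsShuffle (b - 1) τ, F (insertZero 0 τ) else 0) +
        if h : b < n + 1 then ∑ τ with IsShuffle b τ, F (insertZero ⟨b, h⟩ τ) else 0 := by
  have hsplit (p : Fin (n + 1)) :
      ∑ τ, (if IsShuffle b (insertZero p τ) then F (insertZero p τ) else 0) =
        (if p = 0 then if 0 < b then ∑ τ with IsShuffle (b - 1) τ, F (insertZero 0 τ) else 0
          else 0) +
        if (p : ℕ) = b then ∑ τ with IsShuffle b τ, F (insertZero p τ) else 0 := by
    simp only [isShuffle_insertZero, Finset.sum_filter]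
    by_cases hp : p = 0
    · subst hp
      rcases b.eq_zero_or_pos with rfl | hb
      · simp
      · simp [hb, hb.ne]
    · by_cases hpb : (p : ℕ) = b
      · subst hpb
        simp [hp]
      · simp [hp, hpb]
  rw [Finset.sum_filter, ← insertZero_bijective.sum_comp, Fintype.sum_prod_type]
  simp only [hsplit, Finset.sum_add_distrib, Finset.sum_ite_eq', Finset.mem_univ, if_true]
  congr 1
  split_ifs with hb
  · rw [Fintype.sum_eq_single (⟨b, hb⟩ : Fin (n + 1)) fun p hp => if_neg fun h => hp (Fin.ext h),
      if_pos rfl]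
  · exact Finset.sum_eq_zero fun p _ => if_neg fun h : (p : ℕ) = b => hb (h ▸ p.isLt)

end Shuffle

theorem AltCochain.insertAt_ofFn {V : Type*} [AddCommGroup V] {n b : ℕ} {g : AltCochain V}
    (hg : HasDegree b g) (f : AltCochain V) (y : Fin n → V) :
    insertAt (List.ofFn y) f g = ∑ σ : Equiv.Perm (Fin n) with IsShuffle b σ,
      (Equiv.Perm.sign σ : ℤ) •
        f.1 (g.1 ((List.ofFn (y ∘ σ)).take b) :: (List.ofFn (y ∘ σ)).drop b) := by
  induction n generalizing b f g with
  | zero =>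
    have hσ (σ : Equiv.Perm (Fin 0)) : IsShuffle b σ := ⟨finZeroElim, finZeroElim⟩
    simp [hσ, insertAt_nil]
  | succ n ih =>
    obtain ⟨x, y, rfl⟩ : ∃ x y', y = Fin.cons x y' := ⟨_, _, (Fin.cons_self_tail y).symm⟩
    rw [List.ofFn_cons, insertAt_cons, sum_isShuffle_succ, sub_eq_add_neg]
    congr 1
    · split_ifs with hb
      · have hgx : HasDegree (b - 1 : ℕ) (contraction x g) := by
          simpa [Nat.cast_sub hb] using hg.contraction x
        rw [ih hgx]
        refine Finset.sum_congr rfl fun τ _ => ?_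
        obtain ⟨b, rfl⟩ := Nat.exists_eq_add_of_lt hb
        rw [cons_comp_insertZero, ofFn_insertNth, sign_insertZero]
        simp
      · rw [(hg.contraction x).eq_zero_of_neg (by omega), map_zero]
    · rw [hg.parity_eq, map_zsmul, ih hg, Finset.smul_sum, ← Finset.sum_neg_distrib]
      split_ifs with hb
      · refine Finset.sum_congr rfl fun τ _ => ?_
        rw [cons_comp_insertZero, ofFn_insertNth, sign_insertZero]
        have hlen : ((List.ofFn (y ∘ τ)).take b).length = b := by grind
        simp [List.take_left' hlen, List.drop_left' hlen, coe_cons_cons_comm _ x,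
          Int.coe_negOnePow_natCast, mul_smul]
      · refine Finset.sum_eq_zero fun τ _ => ?_
        have hlen : (((List.ofFn (y ∘ τ)).take b).length : ℤ) ≠ b := by grind
        rw [hg _ hlen, coe_zero_cons, smul_zero, smul_zero, neg_zero]

theorem AltCochain.HasDegree.apply_ofFn_eq {V : Type*} [AddCommGroup V] {m n : ℕ}
    {f : AltCochain V} (hm : HasDegree m f) (hn : HasDegree n f) (x : ℕ → V) :
    f.1 (List.ofFn fun i : Fin m => x i) = f.1 (List.ofFn fun i : Fin n => x i) := by
  by_cases h : m = n
  · rw [h]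
  · rw [hm.eq_zero_of_ne hn (by exact_mod_cast h)]
    rfl

theorem toNat_natCast_add_sub_one (i j : ℕ) : (i + j - 1 : ℤ).toNat = i + j - 1 := by
  omega

/-- The sequence map `F`, in the encoding of `ext`, is the cochain `f` of arity `n`. The arity is
an integer because the bracket of two cochains of arity `0` has degree `-1`; a cochain of negative
degree vanishes. -/
def Represents {V : Type*} [AddCommGroup V] (n : ℤ) (F : (ℕ → V) → V) (f : AltCochain V) : Prop :=
  AltCochain.HasDegree n f ∧ ∀ x, F x = f.1 (List.ofFn fun i : Fin n.toNat => x i)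

namespace Represents

open AltCochain

variable {V : Type*} [AddCommGroup V] {a b : ℤ} {F G : (ℕ → V) → V} {f g : AltCochain V}

theorem unique (hF : Represents a F f) (hG : Represents a G f) : F = G := by
  funext x
  rw [hF.2, hG.2]

theorem ins_apply {a b : ℕ} (hF : Represents a F f) (hG : Represents b G g) (x : ℕ → V) :
    _root_.ins a b F G x = (insertion f g).1 (List.ofFn fun i : Fin (a + b - 1) => x i) := by
  rcases a with _ | a
  · rw [_root_.ins, dif_pos rfl, insertion_coe, hF.1.insertAt_eq_zero_of_nonpos le_rfl]
  · rw [_root_.ins, dif_neg a.succ_ne_zero, insertion_coe, insertAt_ofFn hG.1]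
    refine Finset.sum_congr rfl fun σ _ => ?_
    rw [hF.2, List.ofFn_succ, Fin.val_zero, if_pos rfl, hG.2]
    refine congrArg _ (congrArg f.1 (congrArg₂ List.cons (congrArg g.1 ?_) ?_))
    · exact List.ext_getElem (by simp) fun _ _ _ => by simp
    · refine List.ext_getElem (by simp) fun i hi _ => ?_
      rw [List.length_ofFn] at hi
      have hi' : b + i < a + b := by omega
      simp [hi']

theorem toNat (hF : Represents a F f) : Represents a.toNat F f :=
  ⟨hF.1.toNat, hF.2⟩

theorem nij (hF : Represents a F f) (hG : Represents b G g) :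
    Represents (a + b - 1) (nij a.toNat b.toNat F G) (bracket a b f g) := by
  refine ⟨hF.1.bracket hG.1, fun x => ?_⟩
  have hdeg : HasDegree ((a.toNat + b.toNat - 1 : ℕ) : ℤ) (bracket a b f g) := by
    rw [bracket_congr hF.1 hF.1.toNat hG.1 hG.1.toNat]
    simpa only [toNat_natCast_add_sub_one] using (hF.1.toNat.bracket hG.1.toNat).toNat
  rw [(hF.1.bracket hG.1).toNat.apply_ofFn_eq hdeg,
    bracket_congr hF.1 hF.1.toNat hG.1 hG.1.toNat, _root_.nij, hF.toNat.ins_apply hG.toNat,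
    hG.toNat.ins_apply hF.toNat, add_comm b.toNat]
  rfl

theorem add_zsmul (hF : Represents a F f) (hG : Represents a G g) (c : ℤ) :
    Represents a (fun x => F x + c • G x) (f + c • g) :=
  ⟨hF.1.add (hG.1.zsmul c), fun x => by simp [hF.2, hG.2]⟩

end Represents

theorem getD_append_cons_eq_update {α : Type*} {n : ℕ} (l₁ l₂ : List α) (d z : α)
    (h : l₁.length < n) :
    (fun i : Fin n => (l₁ ++ z :: l₂).getD i d) =
      Function.update (fun i : Fin n => (l₁ ++ d :: l₂).getD i d) ⟨l₁.length, h⟩ z := by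
  ext i
  simp only [Function.update_apply, Fin.ext_iff]
  grind

section OfAlternating

variable {R V : Type*} [Semiring R] [AddCommGroup V] [Module R V] {n : ℕ}

/-- An alternating map as a cochain, extended by zero to lists of the wrong length. -/
def AltCochain.ofAlternating (A : V [⋀^Fin n]→ₗ[R] V) : AltCochain V where
  val l := if l.length = n then A fun i => l.getD i 0 else 0
  property := by
    refine ⟨fun l₁ x y l₂ => ?_, fun l₁ x l₂ => ?_⟩
    · simp only [List.length_append, List.length_cons]
      split_ifs with h
      · have hl₁ : l₁.length < n := by omega
        have hupdate (z : V) := getD_append_cons_eq_update l₁ l₂ 0 z hl₁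
        rw [hupdate x, hupdate y, hupdate (x + y), A.map_update_add]
      · rw [add_zero]
    · simp only [List.length_append, List.length_cons]
      split_ifs with h
      · exact A.map_eq_zero_of_eq _ (i := ⟨l₁.length, by omega⟩) (j := ⟨l₁.length + 1, by omega⟩)
          (by simp) (by simp)
      · rfl

open AltCochain

theorem Represents.ofAlternating (A : V [⋀^Fin n]→ₗ[R] V) :
    Represents n (ext A) (ofAlternating A) := by
  refine ⟨fun l hl => if_neg (by exact_mod_cast hl), fun x => ?_⟩
  simp [AltCochain.ofAlternating, ext]

theorem nij_differential_is_odd_derivation_general {c a b : ℕ} (C : V [⋀^Fin c]→ₗ[R] V)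
    (A : V [⋀^Fin a]→ₗ[R] V) (B : V [⋀^Fin b]→ₗ[R] V) :
    nij c (a + b - 1) (ext C) (nij a b (ext A) (ext B)) = fun x =>
      nij (c + a - 1) b (nij c a (ext C) (ext A)) (ext B) x +
        ((((c : ℤ) - 1) * (a - 1)).negOnePow : ℤ) •
          nij a (c + b - 1) (ext A) (nij c b (ext C) (ext B)) x := by
  have hC := Represents.ofAlternating C
  have hA := Represents.ofAlternating A
  have hB := Represents.ofAlternating B
  have hC_AB := hC.nij (hA.nij hB)
  have hCA_B := (hC.nij hA).nij hB
  have hA_CB := hA.nij (hC.nij hB)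
  rw [bracket_bracket hC.1 hA.1 hB.1] at hC_AB
  have hdeg₁ : (c + a - 1 + b - 1 : ℤ) = c + (a + b - 1) - 1 := by ring
  have hdeg₂ : (a + (c + b - 1) - 1 : ℤ) = c + (a + b - 1) - 1 := by ring
  rw [hdeg₁] at hCA_B
  rw [hdeg₂] at hA_CB
  simpa only [toNat_natCast_add_sub_one, Int.toNat_natCast] using
    hC_AB.unique (hCA_B.add_zsmul hA_CB _)

end OfAlternating

/-- for a Lie algebra `g` over a field `K` of characteristic 0 with Lie
bracket `μ ∈ C^2(g)`, the differential `D := [μ, −]` is an odd derivation of the Nijenhuis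
bracket: `D[A,B] = [D A, B] + (−1)^{a−1} [A, D B]` for `A ∈ C^a(g)`, `B ∈ C^b(g)`. -/
theorem nij_differential_is_odd_derivation
    {K : Type*} [Field K] [CharZero K] {L : Type*} [LieRing L] [LieAlgebra K L]
    (μ : AlternatingMap K L L (Fin 2)) (hμ : ∀ x y : L, μ ![x, y] = ⁅x, y⁆)
    (a b : ℕ) (A : AlternatingMap K L L (Fin a)) (B : AlternatingMap K L L (Fin b)) :
    nij 2 (a + b - 1) (ext ⇑μ) (nij a b (ext ⇑A) (ext ⇑B)) = fun x =>
      nij (a + 1) b (nij 2 a (ext ⇑μ) (ext ⇑A)) (ext ⇑B) x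
      + (Int.negOnePow ((a : ℤ) - 1) : ℤ) •
          nij a (b + 1) (ext ⇑A) (nij 2 b (ext ⇑μ) (ext ⇑B)) x := by
  simpa [show 2 + a - 1 = a + 1 by omega, show 2 + b - 1 = b + 1 by omega] using
    nij_differential_is_odd_derivation_general μ A B
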